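/- arXiv:1212.6825 — 2 statements merged into one kernel-verified Lean document; each statement's English description precedes it below -/
import Mathlib

section
/- Let n = ∏_{j=1}^k p_j^{a_j} be the standard factorization of n into distinct primes, let ω ∈ (ℤ/nℤ)^×, r ∈ ℤ/nℤ, and X = ⟨ω⟩r. For each j let ψ_j : ℤ/nℤ → ℤ/p_j^{a_j}ℤ be the natural ring homomorphism, let x_j ∈ ℤ/p_j^{a_j}ℤ be the multiplicative inverse of n/p_j^{a_j} modulo p_j^{a_j}, and let X_j = ⟨ψ_j(ω)⟩·(x_j ψ_j(r)). If the orbit sizes |X_1|, …, |X_k| are pairwise coprime, then σ_X(y) = ∏_{j=1}^k σ_{X_j}(ψ_j(y)) for every y ∈ ℤ/nℤ. -/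
open Complex

/-- `e(θ) = exp(2πiθ)`. -/
noncomputable def e2 (θ : ℝ) : ℂ := Complex.exp (2 * Real.pi * Complex.I * θ)

/-- The cyclic supercharacter attached to a subset `X` of `ℤ/nℤ`:
`σ_X(y) = Σ_{x ∈ X} e(xy/n)`. -/
noncomputable def superchar (n : ℕ) (X : Set (ZMod n)) (y : ZMod n) : ℂ :=
  ∑ᶠ x ∈ X, e2 (((x.val * y.val : ℕ) : ℝ) / (n : ℝ))

/-- The orbit `Ar = {ar : a ∈ A}` of `r` under a unit subgroup `A`. -/
def unitOrbit (n : ℕ) (A : Subgroup (ZMod n)ˣ) (r : ZMod n) : Set (ZMod n) :=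
  (fun a : (ZMod n)ˣ => (a : ZMod n) * r) '' (A : Set (ZMod n)ˣ)

/-!
Since `∑ⱼ xⱼ · (n / qⱼ) ≡ 1 (mod n)`, the character `e(z/n)` is the product of the characters
`e(xⱼ ψⱼ(z) / qⱼ)`, and `z ↦ (xⱼ ψⱼ(z))ⱼ` is a bijection `ℤ/n → ∏ ℤ/qⱼ`. Hence `∏ⱼ σ_{Xⱼ}(ψⱼ(y))` is
`σ_Y(y)` for `Y` the preimage of `∏ⱼ Xⱼ` under this bijection. The preimage always contains the
orbit `⟨ω⟩r`; when the periods `|Xⱼ|` of the cyclic orbits are pairwise coprime, the exponents used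
in the different components can be merged into a single one by the Chinese remainder theorem, so
that the preimage is exactly that orbit.
-/

section CyclicOrbits

open MulAction Subgroup

theorem zpow_smul_eq_zpow_smul_iff_ncard_orbit_dvd {G α : Type*} [Group G] [MulAction G α]
    {g : G} {s : α} {m k : ℤ} :
    g ^ m • s = g ^ k • s ↔ ((orbit (zpowers g) s).ncard : ℤ) ∣ m - k := by
  have hcard : (orbit (zpowers g) s).ncard = Function.minimalPeriod (g • ·) s :=
    (Nat.card_congr (orbitZPowersEquiv g s)).trans (Nat.card_zmod _)
  rw [hcard, ← zpow_smul_eq_iff_minimalPeriod_dvd, sub_eq_neg_add, zpow_add, zpow_neg, mul_smul,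
    inv_smul_eq_iff]

theorem mem_orbit_zpowers_iff {G α : Type*} [Group G] [MulAction G α] {g : G} {s t : α} :
    t ∈ orbit (zpowers g) s ↔ ∃ m : ℤ, g ^ m • s = t := by
  simp only [mem_orbit_iff, Subtype.exists, Subgroup.mk_smul, exists_prop, exists_mem_zpowers]

theorem forall_mem_orbit_zpowers_iff {ι : Type*} [Finite ι] {G α : ι → Type*}
    [∀ i, Group (G i)] [∀ i, MulAction (G i) (α i)] {g : ∀ i, G i} {s t : ∀ i, α i}
    (hcop : Pairwise fun i j =>
      (orbit (zpowers (g i)) (s i)).ncard.Coprime (orbit (zpowers (g j)) (s j)).ncard) :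
    (∀ i, t i ∈ orbit (zpowers (g i)) (s i)) ↔ ∃ m : ℤ, ∀ i, g i ^ m • s i = t i := by
  simp only [mem_orbit_zpowers_iff]
  refine ⟨fun h => ?_, fun ⟨m, hm⟩ i => ⟨m, hm i⟩⟩
  choose k hk using h
  obtain ⟨m, hm⟩ := Ideal.exists_forall_sub_mem_ideal
    (I := fun i => Ideal.span {((orbit (zpowers (g i)) (s i)).ncard : ℤ)})
    (fun i j hij => (Ideal.isCoprime_span_singleton_iff _ _).2 (hcop hij).isCoprime) k
  refine ⟨m, fun i => ?_⟩
  rw [← hk i, zpow_smul_eq_zpow_smul_iff_ncard_orbit_dvd]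
  exact Ideal.mem_span_singleton.1 (hm i)

theorem unitOrbit_eq_orbit (n : ℕ) (A : Subgroup (ZMod n)ˣ) (r : ZMod n) :
    unitOrbit n A r = orbit A r :=
  Set.image_eq_range _ _

end CyclicOrbits

theorem e2_val_mul_val_div (n : ℕ) [NeZero n] (x y : ZMod n) :
    e2 (((x.val * y.val : ℕ) : ℝ) / (n : ℝ)) = ZMod.stdAddChar (x * y) := by
  have hxy : x * y = (((x.val * y.val : ℕ) : ℤ) : ZMod n) := by simp
  rw [hxy, ZMod.stdAddChar_coe, e2]
  push_cast
  ring_nf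

theorem superchar_eq_sum (n : ℕ) [NeZero n] (X : Set (ZMod n)) (y : ZMod n) :
    superchar n X y = ∑ x ∈ X.toFinite.toFinset, ZMod.stdAddChar (x * y) := by
  simp only [superchar, e2_val_mul_val_div, finsum_mem_eq_finite_toFinset_sum _ X.toFinite]

theorem addChar_map_sum {A M ι : Type*} [AddCommMonoid A] [CommMonoid M] (ψ : AddChar A M)
    (s : Finset ι) (f : ι → A) : ψ (∑ i ∈ s, f i) = ∏ i ∈ s, ψ (f i) :=
  map_prod ψ.toMonoidHom (fun i => Multiplicative.ofAdd (f i)) s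

theorem stdAddChar_div_mul_intCast {n d : ℕ} [NeZero n] [NeZero d] (h : d ∣ n) (c : ℤ) :
    ZMod.stdAddChar (((n / d : ℕ) * c : ℤ) : ZMod n) = ZMod.stdAddChar (c : ZMod d) := by
  have hn : (n : ℂ) ≠ 0 := NeZero.ne _
  have hd : (d : ℂ) ≠ 0 := NeZero.ne _
  rw [ZMod.stdAddChar_coe, ZMod.stdAddChar_coe, Int.cast_mul, Int.cast_natCast, Nat.cast_div h hd]
  congr 1
  field_simp

section ChineseRemainder

variable {ι : Type*} {n : ℕ} {q : ι → ℕ}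

/-- The Chinese remainder map `z ↦ (xⱼ ψⱼ(z))ⱼ` from `ℤ/n` to `∏ⱼ ℤ/qⱼ`, twisted by scalars `xⱼ`;
it transports `r` to the base points and the orbit of `r` into the product of the orbits. -/
def scaledResidues (hdvd : ∀ j, q j ∣ n) (x : ∀ j, ZMod (q j)) (z : ZMod n) (j : ι) : ZMod (q j) :=
  x j * ZMod.castHom (hdvd j) (ZMod (q j)) z

theorem scaledResidues_mul (hdvd : ∀ j, q j ∣ n) (x : ∀ j, ZMod (q j)) (z y : ZMod n) (j : ι) :
    scaledResidues hdvd x (z * y) j =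
      scaledResidues hdvd x z j * ZMod.castHom (hdvd j) (ZMod (q j)) y := by
  rw [scaledResidues, scaledResidues, map_mul, mul_assoc]

theorem scaledResidues_units_smul (hdvd : ∀ j, q j ∣ n) (x : ∀ j, ZMod (q j)) (u : (ZMod n)ˣ)
    (z : ZMod n) (j : ι) :
    scaledResidues hdvd x (u • z) j = ZMod.unitsMap (hdvd j) u • scaledResidues hdvd x z j := by
  rw [Units.smul_def, smul_eq_mul, mul_comm, scaledResidues_mul, mul_comm]
  rfl

variable [Fintype ι] (hq : Pairwise fun i j => (q i).Coprime (q j)) (hfac : n = ∏ j, q j)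
  (hdvd : ∀ j, q j ∣ n) {x : ∀ j, ZMod (q j)}

include hq hfac

theorem bijective_pi_castHom :
    Function.Bijective fun (z : ZMod n) j => ZMod.castHom (hdvd j) (ZMod (q j)) z := by
  subst hfac
  convert (ZMod.prodEquivPi q hq).bijective using 3 with z j
  exact (ZMod.prodEquivPi_apply q hq z j).symm

theorem scaledResidues_bijective (hx : ∀ j, IsUnit (x j)) :
    Function.Bijective (scaledResidues hdvd x) :=
  (Function.Bijective.piMap fun j => IsUnit.isUnit_iff_mulLeft_bijective.1 (hx j)).comp
    (bijective_pi_castHom hq hfac hdvd)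

theorem unitOrbit_zpowers_eq_preimage_scaledResidues (hx : ∀ j, IsUnit (x j)) (ω : (ZMod n)ˣ)
    (r : ZMod n)
    (hcop : Pairwise fun i j => Nat.Coprime
      (unitOrbit (q i) (Subgroup.zpowers (ZMod.unitsMap (hdvd i) ω))
        (scaledResidues hdvd x r i)).ncard
      (unitOrbit (q j) (Subgroup.zpowers (ZMod.unitsMap (hdvd j) ω))
        (scaledResidues hdvd x r j)).ncard) :
    unitOrbit n (Subgroup.zpowers ω) r =
      scaledResidues hdvd x ⁻¹' Set.univ.pi fun j =>
        unitOrbit (q j) (Subgroup.zpowers (ZMod.unitsMap (hdvd j) ω))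
          (scaledResidues hdvd x r j) := by
  simp only [unitOrbit_eq_orbit] at hcop ⊢
  ext z
  rw [Set.mem_preimage, Set.mem_univ_pi, forall_mem_orbit_zpowers_iff hcop, mem_orbit_zpowers_iff]
  simp only [← map_zpow, ← scaledResidues_units_smul, ← funext_iff,
    (scaledResidues_bijective hq hfac hdvd hx).injective.eq_iff]

variable (hx : ∀ j, x j * ((n / q j : ℕ) : ZMod (q j)) = 1)

include hx

theorem eq_sum_div_mul_intCast {z : ZMod n} {c : ι → ℤ}
    (hc : ∀ j, (c j : ZMod (q j)) = scaledResidues hdvd x z j) :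
    z = ∑ j, (((n / q j : ℕ) * c j : ℤ) : ZMod n) := by
  refine (bijective_pi_castHom hq hfac hdvd).injective (funext fun i => ?_)
  have hvanish (j : ι) (hji : j ≠ i) : ((n / q j : ℕ) : ZMod (q i)) = 0 :=
    (ZMod.natCast_eq_zero_iff _ _).2 <| (hq hji.symm).dvd_of_dvd_mul_left <|
      (Nat.mul_div_cancel' (hdvd j)).symm ▸ hdvd i
  simp only [map_sum, Int.cast_mul, Int.cast_natCast, map_mul, map_natCast, map_intCast]
  rw [Fintype.sum_eq_single i fun j hji => by rw [hvanish j hji, zero_mul], hc, scaledResidues,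
    ← mul_assoc, mul_comm _ (x i), hx, one_mul]

variable [NeZero n]

theorem stdAddChar_eq_prod_scaledResidues [∀ j, NeZero (q j)] (z : ZMod n) :
    ZMod.stdAddChar z = ∏ j, ZMod.stdAddChar (scaledResidues hdvd x z j) := by
  choose c hc using fun j => ZMod.intCast_surjective (scaledResidues hdvd x z j)
  conv_lhs => rw [eq_sum_div_mul_intCast hq hfac hdvd hx hc, addChar_map_sum]
  simp only [stdAddChar_div_mul_intCast (hdvd _), hc]

theorem superchar_preimage_scaledResidues (X : ∀ j, Set (ZMod (q j))) (y : ZMod n) :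
    superchar n (scaledResidues hdvd x ⁻¹' Set.univ.pi X) y =
      ∏ j, superchar (q j) (X j) (ZMod.castHom (hdvd j) (ZMod (q j)) y) := by
  classical
  have (j : ι) : NeZero (q j) := ⟨ne_zero_of_dvd_ne_zero (NeZero.ne n) (hdvd j)⟩
  simp only [superchar_eq_sum, Finset.prod_univ_sum]
  refine Finset.sum_bijective _
    (scaledResidues_bijective hq hfac hdvd fun j => .of_mul_eq_one _ (hx j))
    (fun z => ?_) fun z _ => ?_
  · simp only [Set.Finite.mem_toFinset, Set.mem_preimage, Set.mem_univ_pi, Fintype.mem_piFinset]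
  · simp only [stdAddChar_eq_prod_scaledResidues hq hfac hdvd hx, scaledResidues_mul]

end ChineseRemainder

theorem stmt1_general {ι : Type*} [Fintype ι] {n : ℕ} [NeZero n] {q : ι → ℕ}
    (hq : Pairwise fun i j => (q i).Coprime (q j)) (hfac : n = ∏ j, q j)
    (hdvd : ∀ j, q j ∣ n) (ω : (ZMod n)ˣ) (r : ZMod n) {x : ∀ j, ZMod (q j)}
    (hx : ∀ j, x j * ((n / q j : ℕ) : ZMod (q j)) = 1) {X : ∀ j, Set (ZMod (q j))}
    (hX : ∀ j, X j = unitOrbit (q j) (Subgroup.zpowers (ZMod.unitsMap (hdvd j) ω))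
      (x j * ZMod.castHom (hdvd j) (ZMod (q j)) r))
    (hcop : Pairwise fun i j => (X i).ncard.Coprime (X j).ncard) (y : ZMod n) :
    superchar n (unitOrbit n (Subgroup.zpowers ω) r) y =
      ∏ j, superchar (q j) (X j) (ZMod.castHom (hdvd j) (ZMod (q j)) y) := by
  obtain rfl : X = _ := funext hX
  rw [unitOrbit_zpowers_eq_preimage_scaledResidues hq hfac hdvd
      (fun j => .of_mul_eq_one _ (hx j)) ω r hcop]
  exact superchar_preimage_scaledResidues hq hfac hdvd hx _ y

theorem stmt1 (n k : ℕ) (hn : 0 < n) (p : Fin k → ℕ) (a : Fin k → ℕ)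
    (hp : ∀ j, (p j).Prime) (ha : ∀ j, 0 < a j) (hinj : Function.Injective p)
    (hfac : n = ∏ j, p j ^ a j)
    (hdvd : ∀ j, p j ^ a j ∣ n)
    (ω : (ZMod n)ˣ) (r : ZMod n)
    (x : ∀ j, ZMod (p j ^ a j))
    (hx : ∀ j, x j * ((n / p j ^ a j : ℕ) : ZMod (p j ^ a j)) = 1)
    (X : ∀ j, Set (ZMod (p j ^ a j)))
    (hX : ∀ j, X j = unitOrbit (p j ^ a j)
      (Subgroup.zpowers (Units.map (ZMod.castHom (hdvd j) (ZMod (p j ^ a j))).toMonoidHom ω))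
      (x j * (ZMod.castHom (hdvd j) (ZMod (p j ^ a j)) r)))
    (hcop : ∀ i j, i ≠ j → Nat.Coprime (X i).ncard (X j).ncard)
    (y : ZMod n) :
    superchar n (unitOrbit n (Subgroup.zpowers ω) r) y
      = ∏ j, superchar (p j ^ a j) (X j) (ZMod.castHom (hdvd j) (ZMod (p j ^ a j)) y) := by
  have : NeZero n := ⟨hn.ne'⟩
  exact stmt1_general (fun i j hij => Nat.coprime_pow_primes _ _ (hp i) (hp j) (hinj.ne hij))
    hfac hdvd ω r hx hX (fun i j => hcop i j) y
end

section
/- Let ω ∈ (ℤ/nℤ)^×, r ∈ ℤ/nℤ, and X = ⟨ω⟩r. Set d = n/gcd(r,n) and k = gcd(w−1, d), where w ∈ {0,1,…,n−1} is the integer representative of ω. Then the image of σ_X in ℂ is invariant under complex conjugation and under rotation by 2π/k about the origin (i.e., under multiplication by e(1/k)); in other words, σ_X has k-fold dihedral symmetry. -/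
open Complex

/-! The shift `y ↦ y + s` multiplies the term of `σ_X(y)` at `x ∈ X` by `e(xs/n)`, so it rotates
the image of `σ_X` by `1/k` of a turn as soon as `xs = n/k` in `ℤ/nℤ` for every `x ∈ X = Ar`. When
`k` divides `n / gcd(r, n)`, Bézout gives an `s` with `rs = n/k`, and `a(n/k) = n/k` for all `a ∈ A`
as soon as `a ≡ 1 mod k`. Conjugation of the values is `y ↦ -y`. -/

open scoped ComplexConjugate

/-- The `k`-fold dihedral symmetry of a plane set: invariance under complex conjugation and under
rotation by `2π/k` about the origin. For `k = 0` the rotation is the identity, as `1 / 0 = 0`. -/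
def HasDihedralSymmetry (k : ℕ) (S : Set ℂ) : Prop :=
  conj '' S = S ∧ (fun z : ℂ => e2 (1 / (k : ℝ)) * z) '' S = S

lemma image_range_eq_range_of_semiconj {α β : Type*} {f : β → β} {g : α → β} {e : α → α}
    (h : Function.Semiconj g e f) (he : Function.Surjective e) :
    f '' Set.range g = Set.range g := by
  rw [← Set.range_comp, ← h.comp_eq, he.range_comp]

section Congruences

variable {n : ℕ} [NeZero n] {d k : ℕ}

lemma exists_mul_eq_natCast_of_gcd_dvd {r : ZMod n} {m : ℕ} (h : Nat.gcd r.val n ∣ m) :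
    ∃ s : ZMod n, r * s = m := by
  obtain ⟨x, y, hxy⟩ := Int.gcd_dvd_iff.1 ((Int.gcd_natCast_natCast r.val n).symm ▸ h)
  refine ⟨x, ?_⟩
  simpa using (congrArg (Int.cast : ℤ → ZMod n) hxy).symm

lemma mul_natCast_div_eq_self_iff (hk : k ∣ n) (a : ZMod n) :
    a * ((n / k : ℕ) : ZMod n) = ((n / k : ℕ) : ZMod n) ↔ a.val ≡ 1 [MOD k] := by
  obtain ⟨m, hm⟩ := hk
  have hkm : k * m ≠ 0 := hm ▸ NeZero.ne n
  have hdiv : n / k = m := by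
    rw [hm, Nat.mul_div_cancel_left _ (Nat.pos_of_ne_zero (left_ne_zero_of_mul hkm))]
  calc a * ((n / k : ℕ) : ZMod n) = ((n / k : ℕ) : ZMod n)
      ↔ ((a.val * m : ℕ) : ZMod n) = ((1 * m : ℕ) : ZMod n) := by simp [hdiv]
    _ ↔ a.val * m ≡ 1 * m [MOD k * m] := by rw [ZMod.natCast_eq_natCast_iff, ← hm]
    _ ↔ a.val ≡ 1 [MOD k] := Nat.ModEq.mul_right_cancel_iff' (right_ne_zero_of_mul hkm)

lemma val_modEq_one_of_mem_zpowers (hk : k ∣ n) {ω a : (ZMod n)ˣ}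
    (hω : (ω : ZMod n).val ≡ 1 [MOD k]) (ha : a ∈ Subgroup.zpowers ω) :
    (a : ZMod n).val ≡ 1 [MOD k] := by
  have hle : Subgroup.zpowers ω ≤ MulAction.stabilizer (ZMod n)ˣ ((n / k : ℕ) : ZMod n) :=
    Subgroup.zpowers_le.2 ((mul_natCast_div_eq_self_iff hk _).2 hω)
  exact (mul_natCast_div_eq_self_iff hk _).1 (hle ha)

lemma val_modEq_one_gcd_val_sub_one (hd : d ∣ n) (ω : (ZMod n)ˣ) :
    (ω : ZMod n).val ≡ 1 [MOD Nat.gcd ((ω : ZMod n).val - 1) d] := by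
  rcases eq_or_ne n 1 with rfl | hn
  -- Here `ω.val = 0`, so `ω.val - 1` truncates.
  · rw [Nat.dvd_one.1 hd, Nat.gcd_one_right]
    exact Nat.modEq_one
  · have : Nontrivial (ZMod n) := ZMod.nontrivial_iff.2 hn
    have hpos : 1 ≤ (ω : ZMod n).val := ZMod.val_pos.2 ω.ne_zero
    exact ((Nat.modEq_iff_dvd' hpos).2 (Nat.gcd_dvd_left _ _)).symm

lemma val_modEq_one_gcd_of_mem_zpowers (hd : d ∣ n) {ω a : (ZMod n)ˣ}
    (ha : a ∈ Subgroup.zpowers ω) :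
    (a : ZMod n).val ≡ 1 [MOD Nat.gcd ((ω : ZMod n).val - 1) d] :=
  val_modEq_one_of_mem_zpowers ((Nat.gcd_dvd_right _ _).trans hd)
    (val_modEq_one_gcd_val_sub_one hd ω) ha

end Congruences

section Supercharacters

variable {n : ℕ} [NeZero n]

lemma e2_natCast_div (m : ℕ) : e2 ((m : ℝ) / (n : ℝ)) = ZMod.stdAddChar (m : ZMod n) := by
  rw [← Int.cast_natCast (R := ZMod n), ZMod.stdAddChar_coe, e2]
  push_cast
  congr 1
  ring

lemma e2_one_div {k : ℕ} (hk : k ∣ n) :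
    e2 (1 / (k : ℝ)) = ZMod.stdAddChar ((n / k : ℕ) : ZMod n) := by
  have hn : (n : ℝ) ≠ 0 := NeZero.ne _
  rw [← e2_natCast_div, Nat.cast_div_charZero hk, div_div_cancel_left' hn, one_div]

lemma superchar_eq_finsum_stdAddChar (X : Set (ZMod n)) (y : ZMod n) :
    superchar n X y = ∑ᶠ x ∈ X, ZMod.stdAddChar (x * y) :=
  finsum_mem_congr rfl fun x _ => by
    rw [e2_natCast_div, Nat.cast_mul, ZMod.natCast_zmod_val, ZMod.natCast_zmod_val]

lemma superchar_neg (X : Set (ZMod n)) (y : ZMod n) :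
    superchar n X (-y) = conj (superchar n X y) := by
  simp only [superchar_eq_finsum_stdAddChar, mul_neg, AddChar.map_neg_eq_conj]
  exact ((starRingEnd ℂ).toAddMonoidHom.map_finsum_mem _ X.toFinite).symm

lemma superchar_add_of_forall_mul_eq {X : Set (ZMod n)} {s t : ZMod n}
    (h : ∀ x ∈ X, x * s = t) (y : ZMod n) :
    superchar n X (y + s) = ZMod.stdAddChar t * superchar n X y := by
  simp only [superchar_eq_finsum_stdAddChar, mul_finsum_mem]
  refine finsum_mem_congr rfl fun x hx => ?_
  rw [mul_add, h x hx, AddChar.map_add_eq_mul, mul_comm]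

lemma conj_image_range_superchar (X : Set (ZMod n)) :
    conj '' Set.range (superchar n X) = Set.range (superchar n X) :=
  image_range_eq_range_of_semiconj (superchar_neg X) neg_surjective

lemma stdAddChar_mul_image_range_superchar {X : Set (ZMod n)} {s t : ZMod n}
    (h : ∀ x ∈ X, x * s = t) :
    (fun z : ℂ => ZMod.stdAddChar t * z) '' Set.range (superchar n X) =
      Set.range (superchar n X) :=
  image_range_eq_range_of_semiconj (superchar_add_of_forall_mul_eq h) (add_right_surjective s)

lemma exists_forall_mem_unitOrbit_mul_eq {k : ℕ} {A : Subgroup (ZMod n)ˣ} {r : ZMod n}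
    (hk : k ∣ n / Nat.gcd r.val n) (hA : ∀ a ∈ A, (a : ZMod n).val ≡ 1 [MOD k]) :
    ∃ s : ZMod n, ∀ x ∈ unitOrbit n A r, x * s = ((n / k : ℕ) : ZMod n) := by
  have hgn : Nat.gcd r.val n ∣ n := Nat.gcd_dvd_right _ _
  have hkn : k ∣ n := hk.trans (Nat.div_dvd_of_dvd hgn)
  have hg : Nat.gcd r.val n ∣ n / k :=
    Nat.dvd_div_of_mul_dvd (mul_comm k _ ▸ Nat.mul_dvd_of_dvd_div hgn hk)
  obtain ⟨s, hs⟩ := exists_mul_eq_natCast_of_gcd_dvd hg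
  refine ⟨s, ?_⟩
  rintro _ ⟨a, ha, rfl⟩
  calc (a : ZMod n) * r * s = a * ((n / k : ℕ) : ZMod n) := by rw [mul_assoc, hs]
    _ = ((n / k : ℕ) : ZMod n) := (mul_natCast_div_eq_self_iff hkn _).2 (hA a ha)

end Supercharacters

theorem stmt5_general {n k : ℕ} [NeZero n] {A : Subgroup (ZMod n)ˣ} {r : ZMod n}
    (hk : k ∣ n / Nat.gcd r.val n) (hA : ∀ a ∈ A, (a : ZMod n).val ≡ 1 [MOD k]) :
    HasDihedralSymmetry k (Set.range (superchar n (unitOrbit n A r))) := by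
  have hkn : k ∣ n := hk.trans (Nat.div_dvd_of_dvd (Nat.gcd_dvd_right _ _))
  obtain ⟨s, hs⟩ := exists_forall_mem_unitOrbit_mul_eq hk hA
  refine ⟨conj_image_range_superchar _, ?_⟩
  rw [e2_one_div hkn]
  exact stdAddChar_mul_image_range_superchar hs

theorem stmt5 (n : ℕ) (hn : 0 < n) (ω : (ZMod n)ˣ) (r : ZMod n)
    (d k : ℕ) (hd : d = n / Nat.gcd r.val n)
    (hk : k = Nat.gcd ((ω : ZMod n).val - 1) d) :
    (starRingEnd ℂ) '' Set.range (superchar n (unitOrbit n (Subgroup.zpowers ω) r))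
        = Set.range (superchar n (unitOrbit n (Subgroup.zpowers ω) r))
    ∧ (fun z : ℂ => e2 (1 / (k : ℝ)) * z) ''
        Set.range (superchar n (unitOrbit n (Subgroup.zpowers ω) r))
        = Set.range (superchar n (unitOrbit n (Subgroup.zpowers ω) r)) := by
  subst hd hk
  have : NeZero n := ⟨hn.ne'⟩
  exact stmt5_general (Nat.gcd_dvd_right _ _) fun _ =>
    val_modEq_one_gcd_of_mem_zpowers (Nat.div_dvd_of_dvd (Nat.gcd_dvd_right _ _))
end
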